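/- Let F be a field of characteristic different from 2 and let u, ϖ ∈ F× be such that u, ϖ and uϖ are all non-squares in F×. Let E = F(√u) and K = E(√ϖ). Then the quadratic form q′ on K, viewed as a 4-dimensional F-vector space, defined by q′(k) = ½·tr_{E/F}(N_{K/E}(k)), is equivalent over F to the diagonal quadratic form ⟨1, u, −ϖ, −uϖ⟩; in particular, the determinant of the Gram matrix of q′ with respect to any F-basis of K is a square in F× (i.e., q′ has trivial discriminant). -/

import Mathlib

/-!
Write `τ = ½ tr_{E/F}`. In the basis `1, √ϖ` of `K` over `E` the norm is `N (x + y√ϖ) = x² - ϖy²`,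
and `ϖ` lies in `F`, so `q′ (x + y√ϖ) = τ (x²) - ϖ τ (y²)`. As `τ ((a + b√u)²) = a² + ub²`, the form
`q′` is `⟨1, u⟩ ⊗ ⟨1, -ϖ⟩`. The element `ϖ` is still not a square in `E`, because an element of `F`
that is a square in `F(√u)` is a square in `F` or becomes one after multiplication by `u`.
The diagonal form has determinant `(uϖ)²`, and a change of basis multiplies it by a nonzero square.
-/

open Module
open QuadraticMap (polar weightedSumSquares)

section SqrtBasis

variable {R S T : Type*} [CommRing R] [CommRing S] [CommRing T] [Algebra R S] [Algebra S T]
  [Algebra R T] [IsScalarTower R S T]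

/-- The basis `B` of the `R`-algebra `S` has the form `(1, √d)`. This encodes `S = R(√d)` together
with the chosen square root `B 1` of `d`. -/
structure IsSqrtBasis (B : Basis (Fin 2) R S) (d : R) : Prop where
  apply_zero : B 0 = 1
  apply_one_sq : B 1 ^ 2 = algebraMap R S d

theorem exists_isSqrtBasis {F : Type*} [Field F] [Nontrivial S] [Algebra F S] {d : F}
    (hd : ¬IsSquare d) {s : S} (hs : s ^ 2 = algebraMap F S d)
    (hspan : ∀ x : S, ∃ a b : F, x = algebraMap F S a + algebraMap F S b * s) :
    ∃ B : Basis (Fin 2) F S, IsSqrtBasis B d := by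
  have hli : LinearIndependent F ![1, s] := by
    rw [LinearIndependent.pair_iff' one_ne_zero]
    rintro a rfl
    refine hd ⟨a, (algebraMap F S).injective ?_⟩
    rw [← hs, map_mul, Algebra.algebraMap_eq_smul_one, sq]
  have htop : ⊤ ≤ Submodule.span F (Set.range ![1, s]) := fun x _ => by
    obtain ⟨a, b, rfl⟩ := hspan x
    rw [Matrix.range_cons_cons_empty, Submodule.mem_span_pair]
    exact ⟨a, b, by simp only [Algebra.smul_def, mul_one]⟩
  exact ⟨Basis.mk hli htop, by simp, by simpa using hs⟩

namespace IsSqrtBasis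

variable {B : Basis (Fin 2) R S} {d : R}

theorem exists_eq_add_mul (hB : IsSqrtBasis B d) (x : S) :
    ∃ a b : R, x = algebraMap R S a + algebraMap R S b * B 1 :=
  ⟨B.repr x 0, B.repr x 1, by
    conv_lhs => rw [← B.sum_repr x]
    simp only [Fin.sum_univ_two, hB.apply_zero, Algebra.smul_def, mul_one]⟩

theorem add_mul_inj (hB : IsSqrtBasis B d) {a b a' b' : R}
    (h : algebraMap R S a + algebraMap R S b * B 1 =
      algebraMap R S a' + algebraMap R S b' * B 1) : a = a' ∧ b = b' := by
  have hpair : LinearIndependent R ![1, B 1] := by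
    convert B.linearIndependent using 1
    ext i
    fin_cases i <;> simp [hB.apply_zero]
  exact hpair.eq_of_pair (by simpa only [Algebra.smul_def, mul_one] using h)

theorem add_mul_sq (hB : IsSqrtBasis B d) (a b : R) :
    (algebraMap R S a + algebraMap R S b * B 1) ^ 2 =
      algebraMap R S (a ^ 2 + d * b ^ 2) + algebraMap R S (2 * a * b) * B 1 := by
  simp only [map_add, map_mul, map_pow, map_ofNat]
  linear_combination algebraMap R S b ^ 2 * hB.apply_one_sq

theorem leftMulMatrix_add_mul (hB : IsSqrtBasis B d) (a b : R) :
    Algebra.leftMulMatrix B (algebraMap R S a + algebraMap R S b * B 1) =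
      !![a, d * b; b, a] := by
  have hmul_zero : (algebraMap R S a + algebraMap R S b * B 1) * B 0 = a • B 0 + b • B 1 := by
    simp only [hB.apply_zero, Algebra.smul_def, mul_one]
  have hmul_one : (algebraMap R S a + algebraMap R S b * B 1) * B 1 =
      (d * b) • B 0 + a • B 1 := by
    simp only [hB.apply_zero, Algebra.smul_def, map_mul, ← hB.apply_one_sq]
    ring
  ext i j
  rw [Algebra.leftMulMatrix_eq_repr_mul]
  fin_cases j <;> fin_cases i <;> simp [hmul_zero, hmul_one]

theorem norm_add_mul (hB : IsSqrtBasis B d) (a b : R) :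
    Algebra.norm R (algebraMap R S a + algebraMap R S b * B 1) = a ^ 2 - d * b ^ 2 := by
  rw [Algebra.norm_eq_matrix_det B, hB.leftMulMatrix_add_mul, Matrix.det_fin_two_of]
  ring

theorem trace_add_mul (hB : IsSqrtBasis B d) (a b : R) :
    Algebra.trace R S (algebraMap R S a + algebraMap R S b * B 1) = 2 * a := by
  rw [Algebra.trace_eq_matrix_trace B, hB.leftMulMatrix_add_mul, Matrix.trace_fin_two_of, two_mul]

theorem isSquare_or_isSquare_mul_of_isSquare_algebraMap [NoZeroDivisors R] (h2 : (2 : R) ≠ 0)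
    (hB : IsSqrtBasis B d) {r : R} (hr : IsSquare (algebraMap R S r)) :
    IsSquare r ∨ IsSquare (d * r) := by
  obtain ⟨x, hx⟩ := hr
  obtain ⟨a, b, rfl⟩ := hB.exists_eq_add_mul x
  have hcoord : r = a ^ 2 + d * b ^ 2 ∧ 0 = 2 * a * b := hB.add_mul_inj <| by
    rw [← hB.add_mul_sq, sq, ← hx, map_zero, zero_mul, add_zero]
  obtain ⟨hre, him⟩ := hcoord
  have hab : a = 0 ∨ b = 0 := by simpa [h2] using him.symm
  rcases hab with rfl | rfl
  · exact .inr ⟨d * b, by rw [hre]; ring⟩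
  · exact .inl ⟨a, by rw [hre]; ring⟩

theorem half_trace_sq [Invertible (2 : R)] (hB : IsSqrtBasis B d) (a b : R) :
    ⅟2 * Algebra.trace R S ((algebraMap R S a + algebraMap R S b * B 1) ^ 2) =
      a ^ 2 + d * b ^ 2 := by
  rw [hB.add_mul_sq, hB.trace_add_mul, invOf_mul_cancel_left']

end IsSqrtBasis

/-- The `R`-basis `(1, √d, √e, √d√e)` of `T = S(√e)` for bases `B = (1, √d)` of `S` over `R` and
`C = (1, √e)` of `T` over `S`, in the order that matches the form `⟨1, d, -e, -de⟩`. -/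
noncomputable def biquadraticBasis (B : Basis (Fin 2) R S) (C : Basis (Fin 2) S T) :
    Basis (Fin 4) R T :=
  (B.smulTower' C).reindex finProdFinEquiv

theorem biquadraticBasis_equivFun_symm {B : Basis (Fin 2) R S} {C : Basis (Fin 2) S T} {d : R}
    {e : S} (hB : IsSqrtBasis B d) (hC : IsSqrtBasis C e) (v : Fin 4 → R) :
    (biquadraticBasis B C).equivFun.symm v =
      algebraMap S T (algebraMap R S (v 0) + algebraMap R S (v 1) * B 1) +
        algebraMap S T (algebraMap R S (v 2) + algebraMap R S (v 3) * B 1) * C 1 := by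
  have hsum : (biquadraticBasis B C).equivFun.symm v =
      v 0 • B 0 • C 0 + v 1 • B 1 • C 0 + v 2 • B 0 • C 1 + v 3 • B 1 • C 1 := by
    rw [Basis.equivFun_symm_apply, Fin.sum_univ_four]
    simp only [biquadraticBasis, Basis.reindex_apply, Basis.smulTower'_apply]
    rfl
  simp only [hsum, hB.apply_zero, hC.apply_zero, Algebra.smul_def, map_add, map_mul, map_one,
    IsScalarTower.algebraMap_apply R S T]
  ring

theorem half_trace_norm_biquadraticBasis [Invertible (2 : R)] {B : Basis (Fin 2) R S}
    {C : Basis (Fin 2) S T} {d e : R} (hB : IsSqrtBasis B d)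
    (hC : IsSqrtBasis C (algebraMap R S e)) (v : Fin 4 → R) :
    ⅟2 * Algebra.trace R S (Algebra.norm S ((biquadraticBasis B C).equivFun.symm v)) =
      weightedSumSquares R ![1, d, -e, -(d * e)] v := by
  rw [biquadraticBasis_equivFun_symm hB hC, hC.norm_add_mul, map_sub, ← Algebra.smul_def e,
    map_smul, smul_eq_mul, mul_sub, mul_left_comm, hB.half_trace_sq, hB.half_trace_sq]
  simp only [QuadraticMap.weightedSumSquares_apply, Fin.sum_univ_four, smul_eq_mul,
    Matrix.cons_val]
  ring

end SqrtBasis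

section Discriminant

theorem polar_weightedSumSquares {R ι : Type*} [CommRing R] [Fintype ι] (w x y : ι → R) :
    polar (weightedSumSquares R w) x y = 2 * ∑ i, w i * x i * y i := by
  simp only [polar, QuadraticMap.weightedSumSquares_apply, ← Finset.sum_sub_distrib,
    Finset.mul_sum, Pi.add_apply, smul_eq_mul]
  exact Finset.sum_congr rfl fun i _ => by ring

variable {R V W ι : Type*} [CommRing R] [Invertible (2 : R)] [AddCommGroup V] [Module R V]
  [AddCommGroup W] [Module R W] [Fintype ι] [DecidableEq ι]

theorem discr_eq_det_polar (Q : QuadraticForm R V) (b : Basis ι R V) :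
    Q.discr b = (Matrix.of fun i j => ⅟2 * polar Q (b i) (b j)).det := by
  refine congrArg Matrix.det (Matrix.ext fun i j => ?_)
  simp [QuadraticForm.toMatrix, LinearMap.toMatrix₂_apply, QuadraticMap.associated_apply, polar]

theorem exists_discr_comp_linearEquiv (b : Basis ι R V) (b' : Basis ι R W) (Q : QuadraticForm R W)
    (e : V ≃ₗ[R] W) :
    ∃ c : Rˣ, QuadraticForm.discr b (Q.comp (e : V →ₗ[R] W)) = c ^ 2 * Q.discr b' := by
  obtain ⟨c, hc⟩ := e.isUnit_det b b'
  exact ⟨c, by rw [QuadraticForm.discr_comp b', hc, sq]⟩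

theorem discr_weightedSumSquares (w : ι → R) :
    QuadraticForm.discr (Pi.basisFun R ι) (weightedSumSquares R w) = ∏ i, w i := by
  rw [discr_eq_det_polar, ← Matrix.det_diagonal]
  refine congrArg Matrix.det (Matrix.ext fun i j => ?_)
  obtain rfl | hij := eq_or_ne i j
  · simp [polar_weightedSumSquares, Pi.single_apply]
  · simp [polar_weightedSumSquares, Pi.single_apply, hij, hij.symm]

end Discriminant

/-- for `E = F(√u)` and `K = E(√ϖ)` with `u, ϖ, uϖ` non-squares in `F`
(char F ≠ 2), the quadratic form `q′(k) = ½·tr_{E/F}(N_{K/E}(k))` on the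
4-dimensional `F`-vector space `K` is equivalent to `⟨1, u, −ϖ, −uϖ⟩`; in
particular its Gram determinant with respect to any `F`-basis is a nonzero
square, i.e. `q′` has trivial discriminant. -/
theorem stmt6 {F E K : Type*} [Field F] [Field E] [Field K]
    [Algebra F E] [Algebra E K] [Algebra F K] [IsScalarTower F E K]
    [FiniteDimensional F E] [FiniteDimensional E K]
    (hchar : (2 : F) ≠ 0)
    (u ϖ : F)
    (hu : ¬ ∃ a : F, a ^ 2 = u) (hϖ : ¬ ∃ a : F, a ^ 2 = ϖ)
    (huϖ : ¬ ∃ a : F, a ^ 2 = u * ϖ)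
    (sqrtu : E) (hsqrtu : sqrtu ^ 2 = algebraMap F E u)
    (hEgen : ∀ x : E, ∃ a b : F, x = algebraMap F E a + algebraMap F E b * sqrtu)
    (sqrtϖ : K) (hsqrtϖ : sqrtϖ ^ 2 = algebraMap F K ϖ)
    (hKgen : ∀ x : K, ∃ a b : E, x = algebraMap E K a + algebraMap E K b * sqrtϖ)
    (q : K → F)
    (hq : ∀ k : K, q k = 1 / 2 * Algebra.trace F E (Algebra.norm E k)) :
    (∃ ℓ : (Fin 4 → F) ≃ₗ[F] K, ∀ v : Fin 4 → F,
        q (ℓ v) = 1 * v 0 ^ 2 + u * v 1 ^ 2 + (-ϖ) * v 2 ^ 2 + (-(u * ϖ)) * v 3 ^ 2) ∧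
    (∀ b : Module.Basis (Fin 4) F K, ∃ c : F, c ≠ 0 ∧
        (Matrix.of fun i j : Fin 4 => (q (b i + b j) - q (b i) - q (b j)) / 2).det
          = c ^ 2) := by
  let : Invertible (2 : F) := invertibleOfNonzero hchar
  have hu' : ¬IsSquare u := fun ⟨a, ha⟩ => hu ⟨a, by rw [ha, sq]⟩
  have hϖ' : ¬IsSquare ϖ := fun ⟨a, ha⟩ => hϖ ⟨a, by rw [ha, sq]⟩
  have huϖ' : ¬IsSquare (u * ϖ) := fun ⟨a, ha⟩ => huϖ ⟨a, by rw [ha, sq]⟩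
  obtain ⟨B, hB⟩ := exists_isSqrtBasis hu' hsqrtu hEgen
  have hϖE : ¬IsSquare (algebraMap F E ϖ) := fun h =>
    (hB.isSquare_or_isSquare_mul_of_isSquare_algebraMap hchar h).elim hϖ' huϖ'
  rw [IsScalarTower.algebraMap_apply F E K] at hsqrtϖ
  obtain ⟨C, hC⟩ := exists_isSqrtBasis hϖE hsqrtϖ hKgen
  let ℓ := (biquadraticBasis B C).equivFun.symm
  let Q : QuadraticForm F (Fin 4 → F) := weightedSumSquares F ![1, u, -ϖ, -(u * ϖ)]
  have hℓ (v : Fin 4 → F) : q (ℓ v) = Q v := by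
    rw [hq, one_div, ← invOf_eq_inv, half_trace_norm_biquadraticBasis hB hC]
  have hqQ : q = Q.comp (ℓ.symm : K →ₗ[F] Fin 4 → F) := funext fun k => by simp [← hℓ]
  refine ⟨⟨ℓ, fun v => by simp [hℓ, Q, Fin.sum_univ_four, sq, mul_assoc]⟩, fun b => ?_⟩
  obtain ⟨c, hc⟩ := exists_discr_comp_linearEquiv b (Pi.basisFun F (Fin 4)) Q ℓ.symm
  have hQ : ∏ i, ![1, u, -ϖ, -(u * ϖ)] i = (u * ϖ) ^ 2 := by
    simp only [Fin.prod_univ_four, Matrix.cons_val]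
    ring
  have huϖ0 : u * ϖ ≠ 0 := fun h => huϖ' (h ▸ IsSquare.zero)
  rw [discr_eq_det_polar, ← hqQ, discr_weightedSumSquares, hQ, ← mul_pow] at hc
  refine ⟨c * (u * ϖ), mul_ne_zero c.ne_zero huϖ0, ?_⟩
  simpa only [polar, invOf_eq_inv, ← div_eq_inv_mul] using hc
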